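/- arXiv:2508.04769 — 10 statements merged into one kernel-verified Lean document; each statement's English description precedes it below -/
import Mathlib

section
/- Let g ⊆ Q be a finite set such that |f_j ∩ g| is even for every j ∈ C_X, and let e ⊆ Q satisfy 2·|e ∩ g| = |g|. If a family τ satisfies the simplified dual inequalities for e, then the first inequality is saturated on g: for every i ∈ g, Σ_{j : i ∈ f_j} τ_{ij} = γ_i, where γ_i = −1 if i ∈ e and γ_i = 1 otherwise. -/
open Finset

/-- The simplified dual inequalities for an error `e`. -/
def SimpDual {Q C_X : Type*} [Fintype C_X] [DecidableEq Q]
    (f : C_X → Finset Q) (e : Finset Q) (τ : C_X → Q → ℝ) : Prop :=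
  (∀ i, ∑ j ∈ Finset.univ.filter (fun j => i ∈ f j), τ j i ≤
      if i ∈ e then (-1 : ℝ) else 1) ∧
  (∀ j, ∀ i ∈ f j, ∀ i' ∈ f j, i ≠ i' → 0 ≤ τ j i + τ j i')

theorem even_sum_nonneg {Q : Type*} [DecidableEq Q] (t : Q → ℝ) : ∀ (n : ℕ) (s : Finset Q),
    s.card = n + n → (∀ i ∈ s, ∀ i' ∈ s, i ≠ i' → 0 ≤ t i + t i') → 0 ≤ ∑ i ∈ s, t i := by
  intro n
  induction n with
  | zero =>
    intro s hs _
    have : s = ∅ := Finset.card_eq_zero.mp (by omega)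
    simp [this]
  | succ k ih =>
    intro s hs h
    obtain ⟨a, ha, b, hb, hab⟩ := Finset.one_lt_card.mp (show 1 < s.card by omega)
    have hb' : b ∈ s.erase a := Finset.mem_erase.mpr ⟨hab.symm, hb⟩
    have h1 := Finset.add_sum_erase s t ha
    have h2 := Finset.add_sum_erase (s.erase a) t hb'
    have h3 := ih ((s.erase a).erase b)
      (by rw [Finset.card_erase_of_mem hb', Finset.card_erase_of_mem ha]; omega)
      (fun i hi i' hi' hne => h i (Finset.mem_of_mem_erase (Finset.mem_of_mem_erase hi)) i'
        (Finset.mem_of_mem_erase (Finset.mem_of_mem_erase hi')) hne)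
    have h4 := h a ha b hb hab
    linarith

/-- If every check overlaps the stabilizer `g` evenly and the error `e` covers
exactly half of `g`, then the first simplified dual inequality is saturated on `g`. -/
theorem stmt6 {Q C_X : Type*} [Fintype C_X] [DecidableEq Q]
    (f : C_X → Finset Q) (g : Finset Q) (e : Finset Q)
    (hfg : ∀ j, Even ((f j ∩ g).card))
    (he : 2 * (e ∩ g).card = g.card)
    (τ : C_X → Q → ℝ) (hτ : SimpDual f e τ) :
    ∀ i ∈ g, ∑ j ∈ Finset.univ.filter (fun j => i ∈ f j), τ j i =
      if i ∈ e then (-1 : ℝ) else 1 := by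
  obtain ⟨h1, h2⟩ := hτ
  have hle : ∀ i ∈ g, ∑ j ∈ Finset.univ.filter (fun j => i ∈ f j), τ j i ≤
      if i ∈ e then (-1 : ℝ) else 1 := fun i _ => h1 i
  have hγ : ∑ i ∈ g, (if i ∈ e then (-1 : ℝ) else 1) = 0 := by
    have h3 : ∀ i ∈ g, (if i ∈ e then (-1 : ℝ) else 1) = 1 - 2 * (if i ∈ e then 1 else 0) := by
      intro i _
      split_ifs <;> norm_num
    rw [Finset.sum_congr rfl h3, Finset.sum_sub_distrib, ← Finset.mul_sum, Finset.sum_boole,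
      Finset.filter_mem_eq_inter, Finset.inter_comm g e]
    have : (2 : ℝ) * ((e ∩ g).card : ℝ) = (g.card : ℝ) := by exact_mod_cast he
    simp [this]
  have hpos : 0 ≤ ∑ i ∈ g, ∑ j ∈ Finset.univ.filter (fun j => i ∈ f j), τ j i := by
    have : ∑ i ∈ g, ∑ j ∈ Finset.univ.filter (fun j => i ∈ f j), τ j i
        = ∑ j, ∑ i ∈ f j ∩ g, τ j i := by
      apply Finset.sum_comm'
      intro x y
      simp [and_comm]
    rw [this]
    apply Finset.sum_nonneg
    intro j _
    obtain ⟨n, hn⟩ := hfg j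
    exact even_sum_nonneg (τ j) n _ hn (fun i hi i' hi' hne =>
      h2 j i (Finset.mem_inter.mp hi).1 i' (Finset.mem_inter.mp hi').1 hne)
  exact (Finset.sum_eq_sum_iff_of_le hle).mp (le_antisymm (Finset.sum_le_sum hle) (hγ ▸ hpos))
end

section
/- Let g, g' ⊆ Q be finite sets with |g| and |g'| even, such that |f_j ∩ g| and |f_j ∩ g'| are even for every j ∈ C_X, and |g ∩ g'| ≥ 2. Suppose every j ∈ C_X with f_j ∩ (g ∩ g') ≠ ∅ satisfies f_j ∩ (g Δ g') ≠ ∅, where Δ denotes symmetric difference. Let e ⊆ Q satisfy |e ∩ (g \ g')| = ⌊|g \ g'|/2⌋, |e ∩ (g' \ g)| = ⌈|g' \ g|/2⌉, and |e ∩ (g ∩ g')| = 1. Then no family τ satisfies the simplified dual inequalities for e. -/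
open Finset

theorem aux_even_sum {Q : Type*} [DecidableEq Q] (S : Finset Q) (hS : Even S.card) (t : Q → ℝ)
    (h : ∀ i ∈ S, ∀ k ∈ S, i ≠ k → 0 ≤ t i + t k) : 0 ≤ ∑ i ∈ S, t i := by
  by_cases hneg : ∀ i ∈ S, 0 ≤ t i
  · exact Finset.sum_nonneg hneg
  push Not at hneg
  obtain ⟨m, hm, hmn⟩ := hneg
  have hc := Finset.card_erase_add_one hm
  have hne : (S.erase m).Nonempty := by
    rw [Finset.nonempty_iff_ne_empty]
    intro h0
    rw [h0] at hc
    rw [← hc] at hS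
    simp at hS
  obtain ⟨k, hk⟩ := hne
  have hpos : ∀ i ∈ S.erase m, 0 ≤ t i := by
    intro i hi
    have hi' := Finset.mem_erase.1 hi
    have := h i hi'.2 m hm hi'.1
    linarith
  have h1 := Finset.single_le_sum hpos hk
  have h2 := Finset.add_sum_erase S t hm
  have hk' := Finset.mem_erase.1 hk
  have := h k hk'.2 m hm hk'.1
  linarith

theorem aux_card {Q : Type*} [DecidableEq Q] (s g g' : Finset Q) :
    (s ∩ g).card = (s ∩ (g \ g')).card + (s ∩ (g ∩ g')).card := by
  rw [← Finset.card_union_of_disjoint]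
  · congr 1; ext x; simp; tauto
  · rw [Finset.disjoint_left]; intro x; simp; tauto

theorem aux_card2 {Q : Type*} [DecidableEq Q] (s g g' : Finset Q) :
    (s ∩ symmDiff g g').card = (s ∩ (g \ g')).card + (s ∩ (g' \ g)).card := by
  rw [← Finset.card_union_of_disjoint]
  · congr 1; ext x; simp [Finset.mem_symmDiff]; tauto
  · rw [Finset.disjoint_left]; intro x; simp; tauto

/-- Two overlapping even-weight stabilizers `g, g'` yield an error pattern `e`
for which no family `τ` satisfies the simplified dual inequalities. -/
theorem stmt7 {Q C_X : Type*} [Fintype C_X] [DecidableEq Q]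
    (f : C_X → Finset Q) (g g' : Finset Q)
    (hg : Even g.card) (hg' : Even g'.card)
    (hfg : ∀ j, Even ((f j ∩ g).card)) (hfg' : ∀ j, Even ((f j ∩ g').card))
    (hoverlap : 2 ≤ (g ∩ g').card)
    (hX : ∀ j, (f j ∩ (g ∩ g')).Nonempty → (f j ∩ symmDiff g g').Nonempty)
    (e : Finset Q)
    (he1 : (e ∩ (g \ g')).card = (g \ g').card / 2)
    (he2 : (e ∩ (g' \ g)).card = ((g' \ g).card + 1) / 2)
    (he3 : (e ∩ (g ∩ g')).card = 1) :
    ∀ τ : C_X → Q → ℝ, ¬ SimpDual f e τ := by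
  rintro τ ⟨h1, h2⟩
  have hT : ∀ j, Even (f j ∩ symmDiff g g').card := by
    intro j
    have a1 := hfg j
    have a2 := hfg' j
    rw [aux_card _ g g'] at a1
    rw [aux_card _ g' g, Finset.inter_comm g' g] at a2
    rw [aux_card2]
    rw [Nat.even_iff] at *
    omega
  have hγ : ∑ i ∈ symmDiff g g', (if i ∈ e then (-1 : ℝ) else 1) = 0 := by
    have b1 := aux_card g g g'
    have b2 := aux_card g' g' g
    have b3 := aux_card2 (symmDiff g g') g g'
    have b4 := aux_card2 e g g'
    have c1 : g ∩ (g \ g') = g \ g' := by ext x; simp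
    have c2 : g' ∩ (g' \ g) = g' \ g := by ext x; simp
    have c3 : g ∩ (g ∩ g') = g ∩ g' := by ext x; simp
    have c4 : g' ∩ (g' ∩ g) = g ∩ g' := by ext x; simp; tauto
    have c5 : symmDiff g g' ∩ (g \ g') = g \ g' := by
      ext x; simp [Finset.mem_symmDiff]; tauto
    have c6 : symmDiff g g' ∩ (g' \ g) = g' \ g := by
      ext x; simp [Finset.mem_symmDiff]; tauto
    rw [c1, c3, Finset.inter_self] at b1
    rw [c2, c4, Finset.inter_self] at b2
    rw [c5, c6, Finset.inter_self] at b3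
    have key : (symmDiff g g').card = 2 * (e ∩ symmDiff g g').card := by
      rw [Nat.even_iff] at hg hg'
      omega
    have e1 : ∀ i, (if i ∈ e then (-1 : ℝ) else 1) = 1 - 2 * (if i ∈ e then 1 else 0) := by
      intro i; split_ifs <;> norm_num
    simp_rw [e1]
    rw [Finset.sum_sub_distrib, ← Finset.mul_sum, Finset.sum_ite_mem, Finset.inter_comm _ e]
    simp only [Finset.sum_const, nsmul_eq_mul, mul_one]
    rw [key]; push_cast; ring
  have hswap : ∑ i ∈ symmDiff g g', ∑ j ∈ Finset.univ.filter (fun j => i ∈ f j), τ j i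
      = ∑ j, ∑ i ∈ f j ∩ symmDiff g g', τ j i := by
    apply Finset.sum_comm'
    intro x y; simp; tauto
  have hle : ∑ j, ∑ i ∈ f j ∩ symmDiff g g', τ j i ≤ 0 := by
    rw [← hswap, ← hγ]
    exact Finset.sum_le_sum fun i _ => h1 i
  have hnn : ∀ j, 0 ≤ ∑ i ∈ f j ∩ symmDiff g g', τ j i := fun j =>
    aux_even_sum _ (hT j) _ fun i hi k hk hik =>
      h2 j i (Finset.mem_inter.1 hi).1 k (Finset.mem_inter.1 hk).1 hik
  have hz : ∀ j, ∑ i ∈ f j ∩ symmDiff g g', τ j i ≤ 0 := fun j =>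
    (Finset.single_le_sum (f := fun j => ∑ i ∈ f j ∩ symmDiff g g', τ j i)
      (fun j _ => hnn j) (Finset.mem_univ j)).trans hle
  obtain ⟨i, hi⟩ : (e ∩ (g ∩ g')).Nonempty := by
    rw [← Finset.card_pos]; omega
  rw [Finset.mem_inter] at hi
  have hi1 := h1 i
  rw [if_pos hi.1] at hi1
  have : 0 ≤ ∑ j ∈ Finset.univ.filter (fun j => i ∈ f j), τ j i := by
    apply Finset.sum_nonneg
    intro j hj
    have hj' : i ∈ f j := (Finset.mem_filter.1 hj).2
    have hne := hX j ⟨i, Finset.mem_inter.2 ⟨hj', hi.2⟩⟩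
    obtain ⟨k, hk, hk0⟩ : ∃ k ∈ f j ∩ symmDiff g g', τ j k ≤ 0 := by
      by_contra! hcon
      exact absurd (Finset.sum_pos hcon hne) (not_lt.2 (hz j))
    rw [Finset.mem_inter] at hk
    have hik : i ≠ k := by
      rintro rfl
      have := hk.2
      have h3 := hi.2
      simp [Finset.mem_symmDiff] at this h3
      tauto
    have := h2 j i hj' k hk.1 hik
    linarith
  linarith
end

section
/- Let (g_0, …, g_{K−1}; i_0, …, i_{K−1}) be a cyclic stabilizer configuration of length K ≥ 3 on Q such that each |g_k| is even and |f_j ∩ g_k| is even for every j ∈ C_X and every k. Suppose every j ∈ C_X with f_j ∩ I ≠ ∅ satisfies f_j ∩ Δ ≠ ∅. Let e ⊆ Q satisfy e ∩ I = {i_0} and |e ∩ (g_k \ I)| = |g_k|/2 − 1 for every k (so that |e ∩ Δ| = |Δ|/2). Then no family τ satisfies the simplified dual inequalities for e. -/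
open Finset

/-- The iterated symmetric difference `g 0 ∆ g 1 ∆ ⋯ ∆ g (K-1)`. -/
def iterSD {Q : Type*} [DecidableEq Q] (K : ℕ) (g : ZMod K → Finset Q) : Finset Q :=
  (List.range K).foldr (fun k acc => symmDiff (g (k : ZMod K)) acc) ∅

lemma iterSD_aux {Q : Type*} [DecidableEq Q] (L : List ℕ) (h : ℕ → Finset Q) (x : Q) :
    (if x ∈ L.foldr (fun k acc => symmDiff (h k) acc) ∅ then (1 : ZMod 2) else 0)
      = (L.map (fun k => if x ∈ h k then (1 : ZMod 2) else 0)).sum := by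
  induction L with
  | nil => simp
  | cons a L ih =>
    rw [List.map_cons, List.sum_cons, ← ih, List.foldr_cons]
    generalize L.foldr (fun k acc => symmDiff (h k) acc) ∅ = T
    have h2 : (1 : ZMod 2) + 1 = 0 := by decide
    by_cases h1 : x ∈ h a <;> by_cases h3 : x ∈ T <;> simp [Finset.mem_symmDiff, h1, h3, h2]

lemma iterSD_ind {Q : Type*} [DecidableEq Q] (K : ℕ) [NeZero K] (g : ZMod K → Finset Q) (x : Q) :
    (if x ∈ iterSD K g then (1 : ZMod 2) else 0)
      = ∑ k : ZMod K, if x ∈ g k then (1 : ZMod 2) else 0 := by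
  unfold iterSD
  have hmap : (do let a ← List.range K; pure (a : ZMod K) : List (ZMod K))
      = (List.range K).map (fun a : ℕ => (a : ZMod K)) := by
    exact bind_pure_comp _ _
  rw [hmap, List.foldr_map]
  rw [iterSD_aux (List.range K) (fun k => g (k : ZMod K)) x]
  have : ∑ k ∈ Finset.range K, (if x ∈ g (k : ZMod K) then (1 : ZMod 2) else 0)
      = ∑ k : ZMod K, if x ∈ g k then (1 : ZMod 2) else 0 := by
    refine Finset.sum_bij' (fun k _ => (k : ZMod K)) (fun k _ => k.val) ?_ ?_ ?_ ?_ ?_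
    · simp
    · intro k _; simpa using ZMod.val_lt k
    · intro k hk; exact ZMod.val_cast_of_lt (by simpa using hk)
    · intro k _; simp
    · simp
  rw [← this]
  rfl

lemma pair_sum_nonneg {Q : Type*} [DecidableEq Q] (S : Finset Q) (t : Q → ℝ) (hS : Even S.card)
    (h : ∀ i ∈ S, ∀ i' ∈ S, i ≠ i' → 0 ≤ t i + t i') : 0 ≤ ∑ i ∈ S, t i := by
  by_cases hn : ∀ i ∈ S, 0 ≤ t i
  · exact Finset.sum_nonneg hn
  push Not at hn
  obtain ⟨m, hm, hmn⟩ := hn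
  have hc : (S.erase m).card + 1 = S.card := Finset.card_erase_add_one hm
  have hne : (S.erase m).Nonempty := by
    rw [← Finset.card_pos]
    rcases Nat.eq_zero_or_pos (S.erase m).card with h0 | h0
    · rw [h0] at hc; rw [← hc] at hS; simp at hS
    · exact h0
  obtain ⟨x, hx⟩ := hne
  have h1 : t x ≤ ∑ i ∈ S.erase m, t i := by
    apply Finset.single_le_sum (f := t) _ hx
    intro i hi
    have := h i (Finset.mem_of_mem_erase hi) m hm (Finset.ne_of_mem_erase hi)
    linarith
  have h2 := h x (Finset.mem_of_mem_erase hx) m hm (Finset.ne_of_mem_erase hx)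
  rw [← Finset.add_sum_erase S t hm]
  linarith

/-- A cyclic configuration of even-weight stabilizers yields an error pattern `e`
for which no family `τ` satisfies the simplified dual inequalities. -/
theorem stmt8 {Q C_X : Type*} [Fintype C_X] [DecidableEq Q] (K : ℕ) [NeZero K]
    (hK : 3 ≤ K)
    (f : C_X → Finset Q) (g : ZMod K → Finset Q) (idx : ZMod K → Q)
    (hidx : Function.Injective idx)
    (hadj : ∀ k, g k ∩ g (k + 1) = {idx k})
    (hfar : ∀ k k' : ZMod K, k' ≠ k - 1 → k' ≠ k → k' ≠ k + 1 → g k ∩ g k' = ∅)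
    (hgEven : ∀ k, Even (g k).card)
    (hfgEven : ∀ j k, Even ((f j ∩ g k).card))
    (hX : ∀ j, (f j ∩ Finset.univ.image idx).Nonempty →
      (f j ∩ iterSD K g).Nonempty)
    (e : Finset Q)
    (heI : e ∩ Finset.univ.image idx = {idx 0})
    (hek : ∀ k, (e ∩ (g k \ Finset.univ.image idx)).card = (g k).card / 2 - 1) :
    ∀ τ : C_X → Q → ℝ, ¬ SimpDual f e τ := by
  rintro τ ⟨h1, h2⟩
  have h10 : (1 : ZMod K) ≠ 0 := by
    have : Fact (1 < K) := ⟨by omega⟩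
    exact one_ne_zero
  have hm1 : ∀ m, idx m ∈ g m := fun m => by
    have : idx m ∈ g m ∩ g (m + 1) := by rw [hadj]; simp
    exact (Finset.mem_inter.1 this).1
  have hm2 : ∀ m, idx m ∈ g (m + 1) := fun m => by
    have : idx m ∈ g m ∩ g (m + 1) := by rw [hadj]; simp
    exact (Finset.mem_inter.1 this).2
  have hm3 : ∀ m k, idx m ∈ g k → k = m ∨ k = m + 1 := by
    intro m k hk
    by_contra hcon
    push Not at hcon
    by_cases hk1 : k = m - 1
    · have : idx m ∈ g k ∩ g (k + 1) := by
        refine Finset.mem_inter.2 ⟨hk, ?_⟩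
        rw [hk1, sub_add_cancel]; exact hm1 m
      rw [hadj, Finset.mem_singleton] at this
      have := hidx this
      exact hcon.1 this.symm
    · have := hfar m k hk1 hcon.1 hcon.2
      have h' : idx m ∈ g m ∩ g k := Finset.mem_inter.2 ⟨hm1 m, hk⟩
      rw [this] at h'
      simp at h'
  have huniq : ∀ x, x ∉ Finset.univ.image idx → ∀ k k', x ∈ g k → x ∈ g k' → k = k' := by
    intro x hx k k' hk hk'
    by_contra hne
    apply hx
    rw [Finset.mem_image]
    by_cases ha : k' = k + 1
    · have : x ∈ g k ∩ g (k + 1) := Finset.mem_inter.2 ⟨hk, ha ▸ hk'⟩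
      rw [hadj, Finset.mem_singleton] at this
      exact ⟨k, Finset.mem_univ _, this.symm⟩
    by_cases hb : k' = k - 1
    · have : x ∈ g k' ∩ g (k' + 1) := Finset.mem_inter.2 ⟨hk', by rw [hb, sub_add_cancel]; exact hk⟩
      rw [hadj, Finset.mem_singleton] at this
      exact ⟨k', Finset.mem_univ _, this.symm⟩
    have := hfar k k' hb (Ne.symm hne) ha
    have h' : x ∈ g k ∩ g k' := Finset.mem_inter.2 ⟨hk, hk'⟩
    rw [this] at h'
    simp at h'
  have h11 : (1 : ZMod 2) + 1 = 0 := by decide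
  have hΔ : iterSD K g = Finset.univ.biUnion (fun k => g k \ Finset.univ.image idx) := by
    ext x
    have hi := iterSD_ind K g x
    by_cases hx : x ∈ Finset.univ.image idx
    · have hz : (∑ k : ZMod K, if x ∈ g k then (1 : ZMod 2) else 0) = 0 := by
        obtain ⟨m, -, rfl⟩ := Finset.mem_image.1 hx
        have : ∀ k, (if idx m ∈ g k then (1 : ZMod 2) else 0)
            = (if k = m then 1 else 0) + (if k = m + 1 then 1 else 0) := by
          intro k
          by_cases hk : k = m
          · subst hk
            simp [hm1, h10]
          by_cases hk' : k = m + 1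
          · subst hk'
            simp [hm2, h10]
          · have : idx m ∉ g k := fun h => (hm3 m k h).elim hk hk'
            simp [hk, hk', this]
        simp only [this, Finset.sum_add_distrib]
        simp [h11]
      rw [hz] at hi
      have hx1 : x ∉ iterSD K g := by
        intro h; simp [h] at hi
      simp only [hx1, false_iff, Finset.mem_biUnion, Finset.mem_sdiff, hx]
      simp
    · by_cases hex : ∃ k, x ∈ g k
      · obtain ⟨k, hk⟩ := hex
        have : ∀ k', (if x ∈ g k' then (1 : ZMod 2) else 0) = if k' = k then 1 else 0 := by
          intro k'
          by_cases hkk : k' = k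
          · subst hkk; simp [hk]
          · have : x ∉ g k' := fun h => hkk (huniq x hx k' k h hk)
            simp [this, hkk]
        simp only [this] at hi
        have hx1 : x ∈ iterSD K g := by
          by_contra h; simp [h] at hi
        simp only [hx1, true_iff, Finset.mem_biUnion, Finset.mem_sdiff]
        exact ⟨k, Finset.mem_univ _, hk, hx⟩
      · push Not at hex
        have hx1 : x ∉ iterSD K g := by
          intro h; simp [h, hex] at hi
        simp only [hx1, false_iff, Finset.mem_biUnion, Finset.mem_sdiff]
        rintro ⟨k, -, hk, -⟩
        exact hex k hk
  have heven : ∀ j, Even (f j ∩ iterSD K g).card := by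
    intro j
    have key : ∀ T : Finset Q, ((f j ∩ T).card : ZMod 2)
        = ∑ x ∈ f j, if x ∈ T then (1 : ZMod 2) else 0 := by
      intro T
      rw [← Finset.filter_mem_eq_inter, Finset.sum_boole]
    rw [← ZMod.natCast_eq_zero_iff_even, key]
    simp only [iterSD_ind]
    rw [Finset.sum_comm]
    apply Finset.sum_eq_zero
    intro k _
    rw [← key, ZMod.natCast_eq_zero_iff_even]
    exact hfgEven j k
  have hγk : ∀ k, ∑ i ∈ g k \ Finset.univ.image idx, (if i ∈ e then (-1 : ℝ) else 1) = 0 := by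
    intro k
    set T := g k \ Finset.univ.image idx with hT
    have hint : g k ∩ Finset.univ.image idx = {idx k, idx (k - 1)} := by
      ext x
      simp only [Finset.mem_inter, Finset.mem_image, Finset.mem_univ, true_and,
        Finset.mem_insert, Finset.mem_singleton]
      constructor
      · rintro ⟨hx, m, rfl⟩
        rcases hm3 m k hx with h | h
        · left; rw [h]
        · right; rw [h]; simp
      · rintro (h | h)
        · rw [h]; exact ⟨hm1 k, k, rfl⟩
        · rw [h]
          refine ⟨?_, _, rfl⟩
          have := hm2 (k - 1)
          rwa [sub_add_cancel] at this
    have hne : idx k ≠ idx (k - 1) := by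
      intro h
      have := hidx h
      apply h10
      have h3 : k - (k - 1) = 0 := sub_eq_zero.2 this
      simpa using h3
    have hcard : T.card + 2 = (g k).card := by
      have := Finset.card_sdiff_add_card_inter (g k) (Finset.univ.image idx)
      rw [hint, Finset.card_pair hne] at this
      exact this
    have hE := hek k
    obtain ⟨c, hc⟩ := hgEven k
    have h3 : T.card = 2 * (e ∩ T).card := by
      rw [hE]; omega
    have h4 : ∀ i, (if i ∈ e then (-1 : ℝ) else 1) = 1 - 2 * (if i ∈ e then (1:ℝ) else 0) := by
      intro i; split_ifs <;> norm_num
    simp only [h4]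
    rw [Finset.sum_sub_distrib, ← Finset.mul_sum, Finset.sum_boole, Finset.filter_mem_eq_inter,
      Finset.inter_comm T e]
    simp only [Finset.sum_const, nsmul_eq_mul, mul_one]
    rw [h3]; push_cast; ring
  have hγ : ∑ i ∈ iterSD K g, (if i ∈ e then (-1 : ℝ) else 1) = 0 := by
    rw [hΔ, Finset.sum_biUnion]
    · exact Finset.sum_eq_zero fun k _ => hγk k
    · intro k _ k' _ hne
      rw [Function.onFun, Finset.disjoint_left]
      intro x hx hx'
      rw [Finset.mem_sdiff] at hx hx'
      exact hne (huniq x hx.2 k k' hx.1 hx'.1)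
  have hnn : ∀ j, 0 ≤ ∑ i ∈ f j ∩ iterSD K g, τ j i := by
    intro j
    apply pair_sum_nonneg _ _ (heven j)
    intro i hi i' hi' hne
    exact h2 j i (Finset.mem_inter.1 hi).1 i' (Finset.mem_inter.1 hi').1 hne
  have hle : ∑ j, ∑ i ∈ f j ∩ iterSD K g, τ j i ≤ 0 := by
    have hs : ∑ j, ∑ i ∈ f j ∩ iterSD K g, τ j i
        = ∑ i ∈ iterSD K g, ∑ j ∈ Finset.univ.filter (fun j => i ∈ f j), τ j i := by
      apply Finset.sum_comm'
      intro j i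
      simp
    rw [hs, ← hγ]
    exact Finset.sum_le_sum fun i _ => h1 i
  have hzero : ∀ j, ∑ i ∈ f j ∩ iterSD K g, τ j i = 0 := by
    intro j
    have := Finset.single_le_sum (f := fun j => ∑ i ∈ f j ∩ iterSD K g, τ j i)
      (fun j _ => hnn j) (Finset.mem_univ j)
    exact le_antisymm (this.trans hle) (hnn j)
  have h0e : idx 0 ∈ e := by
    have : idx 0 ∈ e ∩ Finset.univ.image idx := by rw [heI]; simp
    exact (Finset.mem_inter.1 this).1
  have hmain := h1 (idx 0)
  rw [if_pos h0e] at hmain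
  have hpos : 0 ≤ ∑ j ∈ Finset.univ.filter (fun j => idx 0 ∈ f j), τ j (idx 0) := by
    apply Finset.sum_nonneg
    intro j hj
    have hj : idx 0 ∈ f j := by simpa using hj
    by_contra hneg
    push Not at hneg
    have hI : idx 0 ∈ Finset.univ.image idx := Finset.mem_image_of_mem _ (Finset.mem_univ _)
    have hne := hX j ⟨idx 0, Finset.mem_inter.2 ⟨hj, hI⟩⟩
    have : 0 < ∑ i ∈ f j ∩ iterSD K g, τ j i := by
      apply Finset.sum_pos _ hne
      intro i hi
      rw [Finset.mem_inter] at hi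
      have hi0 : i ≠ idx 0 := by
        rintro rfl
        have := hi.2
        rw [hΔ, Finset.mem_biUnion] at this
        obtain ⟨k, -, hk⟩ := this
        exact (Finset.mem_sdiff.1 hk).2 hI
      have := h2 j i hi.1 (idx 0) hj hi0
      linarith
    rw [hzero j] at this
    exact lt_irrefl _ this
  linarith
end

section
/- Let g, g' ⊆ Q be finite sets such that |f_j ∩ g| and |f_j ∩ g'| are even for every j ∈ C_X, and suppose every j ∈ C_X with f_j ∩ (g ∩ g') ≠ ∅ satisfies f_j ∩ (g Δ g') ≠ ∅. Let e ⊆ g ∪ g' satisfy |e ∩ (g \ g')| = ⌊|g \ g'|/2⌋, |e ∩ (g' \ g)| = ⌈|g' \ g|/2⌉, and |e ∩ (g ∩ g')| = 1, with |g| and |g'| even, and define the syndrome s : C_X → ZMod 2 by s_j = |e ∩ f_j| mod 2. Define x : Q → ℝ by x_i = 1/2 for i ∈ g Δ g' and x_i = 0 otherwise. Then there exists a family w such that (x, w) is feasible for the syndrome-based LP with syndrome s, and its objective value satisfies Σ_{i ∈ Q} x_i = |g Δ g'|/2 = |e| − 1. In particular, the optimal value of this LP is strictly smaller than |e|. -/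
open Finset

/-- Feasibility for the syndrome-based LP. -/
def SynFeasible {Q C_X : Type*} [DecidableEq Q]
    (f : C_X → Finset Q) (s : C_X → ZMod 2) (x : Q → ℝ) (w : C_X → Finset Q → ℝ) : Prop :=
  (∀ j, ∑ S ∈ (f j).powerset.filter (fun S => (S.card : ZMod 2) = s j), w j S = 1) ∧
  (∀ j, ∀ i ∈ f j,
    ∑ S ∈ (f j).powerset.filter (fun S => (S.card : ZMod 2) = s j ∧ i ∈ S), w j S = x i) ∧
  (∀ i, 0 ≤ x i) ∧
  (∀ j, ∀ S ∈ (f j).powerset.filter (fun S => (S.card : ZMod 2) = s j), 0 ≤ w j S)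

/-- The half-integral vector supported on `g ∆ g'` extends to a feasible solution of
the syndrome-based LP whose objective value is `|g ∆ g'|/2 = |e| − 1 < |e|`. -/
theorem stmt9 {Q C_X : Type*} [Fintype Q] [DecidableEq Q]
    (f : C_X → Finset Q) (g g' : Finset Q)
    (hg : Even g.card) (hg' : Even g'.card)
    (hfg : ∀ j, Even ((f j ∩ g).card)) (hfg' : ∀ j, Even ((f j ∩ g').card))
    (hX : ∀ j, (f j ∩ (g ∩ g')).Nonempty → (f j ∩ symmDiff g g').Nonempty)
    (e : Finset Q) (hesub : e ⊆ g ∪ g')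
    (he1 : (e ∩ (g \ g')).card = (g \ g').card / 2)
    (he2 : (e ∩ (g' \ g)).card = ((g' \ g).card + 1) / 2)
    (he3 : (e ∩ (g ∩ g')).card = 1)
    (s : C_X → ZMod 2) (hs : ∀ j, s j = ((e ∩ f j).card : ZMod 2))
    (x : Q → ℝ) (hx : ∀ i, x i = if i ∈ symmDiff g g' then (1 / 2 : ℝ) else 0) :
    (∃ w : C_X → Finset Q → ℝ, SynFeasible f s x w) ∧
      ∑ i, x i = ((symmDiff g g').card : ℝ) / 2 ∧
      ∑ i, x i = (e.card : ℝ) - 1 ∧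
      ∑ i, x i < (e.card : ℝ) := by
  have hsd : ∀ i, i ∈ symmDiff g g' ↔ (i ∈ g ∧ i ∉ g') ∨ (i ∈ g' ∧ i ∉ g) := fun i => mem_symmDiff
  have hcardsd : ∀ F : Finset Q, (F ∩ symmDiff g g').card + 2 * (F ∩ (g ∩ g')).card
      = (F ∩ g).card + (F ∩ g').card := by
    intro F
    have h1 : (F ∩ symmDiff g g').card = (F ∩ (g \ g')).card + (F ∩ (g' \ g)).card := by
      rw [← card_union_of_disjoint]
      · congr 1; ext i; simp [hsd]; tauto
      · rw [Finset.disjoint_left]; intro i; simp; tauto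
    have h2 : (F ∩ g).card = (F ∩ (g \ g')).card + (F ∩ (g ∩ g')).card := by
      rw [← card_union_of_disjoint]
      · congr 1; ext i; simp; tauto
      · rw [Finset.disjoint_left]; intro i; simp; tauto
    have h3 : (F ∩ g').card = (F ∩ (g' \ g)).card + (F ∩ (g ∩ g')).card := by
      rw [← card_union_of_disjoint]
      · congr 1; ext i; simp; tauto
      · rw [Finset.disjoint_left]; intro i; simp; tauto
    omega
  have hA : ∀ j, ∃ A, A ⊆ f j ∩ symmDiff g g' ∧ (A.card : ZMod 2) = s j := by
    intro j
    have hz : ∀ z : ZMod 2, z = 0 ∨ z = 1 := by decide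
    rcases (f j ∩ symmDiff g g').eq_empty_or_nonempty with h | ⟨a, ha⟩
    · refine ⟨∅, by simp, ?_⟩
      have hn : ¬ (f j ∩ (g ∩ g')).Nonempty := by
        intro h'; have := hX j h'; rw [h] at this; simp at this
      have : e ∩ f j = ∅ := by
        rw [Finset.eq_empty_iff_forall_notMem]
        intro i hi
        rw [mem_inter] at hi
        have h1 := hesub hi.1
        rw [mem_union] at h1
        by_cases hi2 : i ∈ g ∩ g'
        · exact hn ⟨i, mem_inter.2 ⟨hi.2, hi2⟩⟩
        · have : i ∈ f j ∩ symmDiff g g' := by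
            rw [mem_inter, hsd]; rw [mem_inter] at hi2; tauto
          rw [h] at this; simp at this
      rw [hs, this]
    · rcases hz (s j) with h | h
      · exact ⟨∅, by simp, by simp [h]⟩
      · exact ⟨{a}, by simpa using ha, by simp [h]⟩
  have hsum : ∑ i, x i = ((symmDiff g g').card : ℝ) / 2 := by
    simp only [hx]
    rw [Finset.sum_ite_mem]
    simp [div_eq_mul_inv]
  have hc : (symmDiff g g').card + 2 = 2 * e.card := by
    have h1 : (symmDiff g g').card = (g \ g').card + (g' \ g).card := by
      rw [← card_union_of_disjoint]
      · congr 1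
      · rw [Finset.disjoint_left]; intro i; simp; tauto
    have h2 : g.card = (g \ g').card + (g ∩ g').card := (card_sdiff_add_card_inter g g').symm
    have h3 : g'.card = (g' \ g).card + (g ∩ g').card := by
      rw [inter_comm]; exact (card_sdiff_add_card_inter g' g).symm
    have h4 := hcardsd e
    have h5 : (e ∩ symmDiff g g').card = (e ∩ (g \ g')).card + (e ∩ (g' \ g)).card := by
      rw [← card_union_of_disjoint]
      · congr 1; ext i; simp [hsd]; tauto
      · rw [Finset.disjoint_left]; intro i; simp; tauto
    have h6 : e.card = (e ∩ symmDiff g g').card + (e ∩ (g ∩ g')).card := by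
      rw [← card_union_of_disjoint]
      · congr 1; ext i
        have := @hesub i
        simp [hsd] at this ⊢; tauto
      · rw [Finset.disjoint_left]; intro i; simp [hsd]; tauto
    obtain ⟨a, ha⟩ := hg
    obtain ⟨b, hb⟩ := hg'
    omega
  have hc' : ((symmDiff g g').card : ℝ) + 2 = 2 * e.card := by exact_mod_cast hc
  refine ⟨?_, hsum, by rw [hsum]; linarith, by rw [hsum]; linarith⟩
  choose A hAs hAc using hA
  have hBc : ∀ j, (((f j ∩ symmDiff g g') \ A j).card : ZMod 2) = s j := by
    intro j
    have h1 := card_sdiff_add_card_eq_card (hAs j)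
    have h2 : Even (f j ∩ symmDiff g g').card := by
      have := hcardsd (f j)
      have h3 := hfg j
      have h4 := hfg' j
      rw [Nat.even_iff] at *
      omega
    rw [← hAc j, ZMod.natCast_eq_natCast_iff]
    rw [Nat.even_iff] at h2
    unfold Nat.ModEq
    omega
  have hAf : ∀ j, A j ⊆ f j := fun j => (hAs j).trans inter_subset_left
  have hBf : ∀ j, (f j ∩ symmDiff g g') \ A j ⊆ f j :=
    fun j => sdiff_subset.trans inter_subset_left
  refine ⟨fun j S => (if S = A j then (1 / 2 : ℝ) else 0) +
    (if S = (f j ∩ symmDiff g g') \ A j then (1 / 2 : ℝ) else 0), ?_, ?_, ?_, ?_⟩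
  · intro j
    rw [sum_add_distrib, sum_ite_eq', sum_ite_eq', if_pos, if_pos]
    · norm_num
    · rw [mem_filter, mem_powerset]; exact ⟨hBf j, hBc j⟩
    · rw [mem_filter, mem_powerset]; exact ⟨hAf j, hAc j⟩
  · intro j i hi
    rw [sum_add_distrib, sum_ite_eq', sum_ite_eq', hx]
    simp only [mem_filter, mem_powerset, hAf j, hAc j, hBf j, hBc j, true_and]
    have h1 := @hAs j i
    rw [mem_inter] at h1
    simp only [mem_sdiff, mem_inter]
    by_cases h2 : i ∈ A j
    · have h3 := (h1 h2).2
      rw [if_pos h2, if_pos h3, if_neg (by tauto)]; norm_num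
    · simp only [h2, hi, true_and, not_false_eq_true, and_true, if_false, zero_add]
  · intro i
    rw [hx]; split_ifs <;> norm_num
  · intro j S _
    dsimp only
    split_ifs <;> norm_num
end

section
/- Let (g_0, …, g_{K−1}; i_0, …, i_{K−1}) be a cyclic stabilizer configuration of length K ≥ 3 on Q such that each |g_k| is even and |f_j ∩ g_k| is even for every j ∈ C_X and every k, and suppose every j ∈ C_X with f_j ∩ I ≠ ∅ satisfies f_j ∩ Δ ≠ ∅. Let e ⊆ g_0 ∪ ⋯ ∪ g_{K−1} satisfy e ∩ I = {i_0} and |e ∩ (g_k \ I)| = |g_k|/2 − 1 for every k, and define the syndrome s : C_X → ZMod 2 by s_j = |e ∩ f_j| mod 2. Define x : Q → ℝ by x_i = 1/2 for i ∈ Δ and x_i = 0 otherwise. Then there exists a family w such that (x, w) is feasible for the syndrome-based LP with syndrome s, and its objective value satisfies Σ_{i ∈ Q} x_i = |Δ|/2 = |e| − 1. In particular, the optimal value of this LP is strictly smaller than |e|. -/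
open Finset

lemma iterSD_eq {Q : Type*} [DecidableEq Q] (K : ℕ) (g : ZMod K → Finset Q) :
    iterSD K g =
      (List.range K).foldr (fun (k : ℕ) acc => symmDiff (g (k : ZMod K)) acc) ∅ := by
  unfold iterSD
  induction List.range K with
  | nil => rfl
  | cons a l ih =>
    rw [List.foldr_cons, ← ih]
    rfl

lemma even_card_symmDiff_aux {Q : Type*} [DecidableEq Q] (A B : Finset Q)
    (hA : Even A.card) (hB : Even B.card) : Even (symmDiff A B).card := by
  have h1 : (symmDiff A B).card = (A \ B).card + (B \ A).card := by
    rw [symmDiff_def, Finset.sup_eq_union, Finset.card_union_of_disjoint]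
    exact disjoint_sdiff_sdiff
  have h2 := Finset.card_sdiff_add_card_inter A B
  have h3 := Finset.card_sdiff_add_card_inter B A
  rw [Finset.inter_comm] at h3
  rw [Nat.even_iff] at *
  omega

lemma even_inter_iterSD {Q : Type*} [DecidableEq Q] (K : ℕ) (g : ZMod K → Finset Q)
    (F : Finset Q) (h : ∀ k, Even ((F ∩ g k).card)) : Even (F ∩ iterSD K g).card := by
  rw [iterSD_eq]
  induction List.range K with
  | nil => simp
  | cons a l ih =>
    rw [List.foldr_cons]
    have : F ∩ symmDiff (g (a : ZMod K))
        (l.foldr (fun (k : ℕ) acc => symmDiff (g (k : ZMod K)) acc) ∅) =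
        symmDiff (F ∩ g (a : ZMod K))
          (F ∩ l.foldr (fun (k : ℕ) acc => symmDiff (g (k : ZMod K)) acc) ∅) := by
      ext q
      simp only [Finset.mem_inter, Finset.mem_symmDiff]
      tauto
    rw [this]
    exact even_card_symmDiff_aux _ _ (h _) ih

lemma ind_iterSD {Q : Type*} [DecidableEq Q] (K : ℕ) [NeZero K] (g : ZMod K → Finset Q)
    (q : Q) : (if q ∈ iterSD K g then (1 : ZMod 2) else 0)
      = ∑ k : ZMod K, (if q ∈ g k then (1 : ZMod 2) else 0) := by
  have h1 : ∀ l : List ℕ,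
      (if q ∈ l.foldr (fun (k : ℕ) acc => symmDiff (g (k : ZMod K)) acc) ∅ then (1 : ZMod 2) else 0)
      = (l.map (fun k : ℕ => if q ∈ g (k : ZMod K) then (1 : ZMod 2) else 0)).sum := by
    intro l
    induction l with
    | nil => simp
    | cons a l ih =>
      rw [List.foldr_cons, List.map_cons, List.sum_cons, ← ih]
      simp only [Finset.mem_symmDiff]
      have : (1 : ZMod 2) + 1 = 0 := by decide
      by_cases h : q ∈ g (a : ZMod K) <;>
      by_cases h' : q ∈ l.foldr (fun (k : ℕ) acc => symmDiff (g (k : ZMod K)) acc) ∅ <;>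
      simp [h, h', this]
  rw [iterSD_eq]
  rw [h1]
  obtain ⟨n, rfl⟩ : ∃ n, K = n + 1 := ⟨K - 1, by have := NeZero.pos K; omega⟩
  have h2 : ∀ F : ZMod (n+1) → ZMod 2,
      ∑ k : ZMod (n+1), F k = ∑ k ∈ Finset.range (n+1), F (k : ZMod (n+1)) := by
    intro F
    rw [← Fin.sum_univ_eq_sum_range (fun k => F (k : ZMod (n+1)))]
    refine Finset.sum_congr rfl ?_
    intro k _
    congr 1
    exact (ZMod.natCast_zmod_val (n := n+1) k).symm
  rw [h2]
  rfl

lemma exists_w {Q : Type*} [DecidableEq Q] (F D : Finset Q) (hD : D ⊆ F)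
    (he : Even D.card) (t : ZMod 2) (ht : D = ∅ → t = 0) :
    ∃ w : Finset Q → ℝ,
      (∑ S ∈ F.powerset.filter (fun S => (S.card : ZMod 2) = t), w S = 1) ∧
      (∀ i ∈ F, ∑ S ∈ F.powerset.filter (fun S => (S.card : ZMod 2) = t ∧ i ∈ S), w S
        = if i ∈ D then (1/2 : ℝ) else 0) ∧ ∀ S, 0 ≤ w S := by
  obtain ⟨A, hAD, hA⟩ : ∃ A ⊆ D, (A.card : ZMod 2) = t := by
    have h01 : ∀ t : ZMod 2, t = 0 ∨ t = 1 := by decide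
    rcases h01 t with h | h
    · exact ⟨∅, by simp, by simp [h]⟩
    · have : D.Nonempty := by
        rw [Finset.nonempty_iff_ne_empty]
        intro h0
        have := ht h0
        rw [h] at this
        exact absurd this (by decide)
      obtain ⟨a, ha⟩ := this
      exact ⟨{a}, by simpa using ha, by simp [h]⟩
  have hB : ((D \ A).card : ZMod 2) = t := by
    have h1 := Finset.card_sdiff_add_card_eq_card hAD
    have h2 : (D.card : ZMod 2) = 0 := by
      rw [ZMod.natCast_eq_zero_iff]; exact he.two_dvd
    rw [← h1, Nat.cast_add, hA] at h2
    have h3 : ∀ a b : ZMod 2, a + b = 0 → a = b := by decide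
    exact h3 _ _ h2
  refine ⟨fun S => (if S = A then 1/2 else 0) + (if S = D \ A then 1/2 else 0), ?_, ?_, ?_⟩
  · rw [Finset.sum_add_distrib, Finset.sum_ite_eq', Finset.sum_ite_eq', if_pos, if_pos]
    · norm_num
    · simp only [Finset.mem_filter, Finset.mem_powerset]
      exact ⟨Finset.sdiff_subset.trans hD, hB⟩
    · simp only [Finset.mem_filter, Finset.mem_powerset]
      exact ⟨hAD.trans hD, hA⟩
  · intro i _
    rw [Finset.sum_add_distrib, Finset.sum_ite_eq', Finset.sum_ite_eq']
    simp only [Finset.mem_filter, Finset.mem_powerset, hA, hB, hAD.trans hD,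
      Finset.sdiff_subset.trans hD, true_and, Finset.mem_sdiff]
    by_cases h1 : i ∈ A
    · simp [h1, hAD h1]
    · by_cases h2 : i ∈ D <;> simp [h1, h2]
  · intro S
    dsimp only
    positivity

/-- For a cyclic stabilizer configuration, the half-integral vector supported on the
iterated symmetric difference `Δ` extends to a feasible solution of the syndrome-based
LP whose objective value is `|Δ|/2 = |e| − 1 < |e|`. -/
theorem stmt10 {Q C_X : Type*} [Fintype Q] [DecidableEq Q] (K : ℕ) [NeZero K]
    (hK : 3 ≤ K)
    (f : C_X → Finset Q) (g : ZMod K → Finset Q) (idx : ZMod K → Q)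
    (hidx : Function.Injective idx)
    (hadj : ∀ k, g k ∩ g (k + 1) = {idx k})
    (hfar : ∀ k k' : ZMod K, k' ≠ k - 1 → k' ≠ k → k' ≠ k + 1 → g k ∩ g k' = ∅)
    (hgEven : ∀ k, Even (g k).card)
    (hfgEven : ∀ j k, Even ((f j ∩ g k).card))
    (hX : ∀ j, (f j ∩ Finset.univ.image idx).Nonempty →
      (f j ∩ iterSD K g).Nonempty)
    (e : Finset Q) (hesub : e ⊆ Finset.univ.biUnion g)
    (heI : e ∩ Finset.univ.image idx = {idx 0})
    (hek : ∀ k, (e ∩ (g k \ Finset.univ.image idx)).card = (g k).card / 2 - 1)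
    (s : C_X → ZMod 2) (hs : ∀ j, s j = ((e ∩ f j).card : ZMod 2))
    (x : Q → ℝ) (hx : ∀ i, x i = if i ∈ iterSD K g then (1 / 2 : ℝ) else 0) :
    (∃ w : C_X → Finset Q → ℝ, SynFeasible f s x w) ∧
      ∑ i, x i = ((iterSD K g).card : ℝ) / 2 ∧
      ∑ i, x i = (e.card : ℝ) - 1 ∧
      ∑ i, x i < (e.card : ℝ) := by
  classical
  set I := Finset.univ.image idx with hI
  have hl : ∀ k, idx k ∈ g k := fun k => by
    have : idx k ∈ g k ∩ g (k+1) := by rw [hadj]; simp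
    exact (Finset.mem_inter.1 this).1
  have hr : ∀ k, idx k ∈ g (k+1) := fun k => by
    have : idx k ∈ g k ∩ g (k+1) := by rw [hadj]; simp
    exact (Finset.mem_inter.1 this).2
  have hone : (1 : ZMod K) ≠ 0 := by
    have : Fact (1 < K) := ⟨by omega⟩
    exact one_ne_zero
  -- two memberships force being an idx
  have htwo : ∀ q k k', q ∈ g k → q ∈ g k' → k ≠ k' →
      (k' = k + 1 ∧ q = idx k) ∨ (k = k' + 1 ∧ q = idx k') := by
    intro q k k' h h' hne
    by_cases h1 : k' = k + 1
    · left
      refine ⟨h1, ?_⟩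
      subst h1
      have : q ∈ g k ∩ g (k+1) := Finset.mem_inter.2 ⟨h, h'⟩
      rw [hadj] at this
      simpa using this
    by_cases h2 : k' = k - 1
    · right
      have h3 : k = k' + 1 := by rw [h2]; ring
      refine ⟨h3, ?_⟩
      subst h3
      have : q ∈ g k' ∩ g (k'+1) := Finset.mem_inter.2 ⟨h', h⟩
      rw [hadj] at this
      simpa using this
    · exfalso
      have := hfar k k' h2 (Ne.symm hne) h1
      have h4 : q ∈ g k ∩ g k' := Finset.mem_inter.2 ⟨h, h'⟩
      rw [this] at h4
      simp at h4
  have hmemI : ∀ k k', idx k ∈ g k' ↔ k' = k ∨ k' = k + 1 := by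
    intro k k'
    constructor
    · intro h
      by_cases hne : k = k'
      · exact Or.inl hne.symm
      · rcases htwo _ _ _ (hl k) h hne with ⟨h1, _⟩ | ⟨h1, h2⟩
        · exact Or.inr h1
        · exact absurd (hidx h2) hne
    · rintro (rfl | rfl)
      · exact hl _
      · exact hr _
  have hdisj : ∀ q k k', q ∈ g k → q ∈ g k' → q ∉ I → k = k' := by
    intro q k k' h h' hq
    by_contra hne
    rcases htwo q k k' h h' hne with ⟨_, h2⟩ | ⟨_, h2⟩ <;>
    · apply hq; rw [h2, hI]; simp
  have hD : iterSD K g = Finset.univ.biUnion (fun k => g k \ I) := by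
    ext q
    have hind := ind_iterSD K g q
    have key : (∑ k : ZMod K, (if q ∈ g k then (1 : ZMod 2) else 0))
        = if q ∈ Finset.univ.biUnion (fun k => g k \ I) then 1 else 0 := by
      by_cases hq : q ∈ I
      · rw [if_neg (by simp [hq])]
        obtain ⟨k, _, rfl⟩ := Finset.mem_image.1 hq
        have : ∀ k', (if idx k ∈ g k' then (1 : ZMod 2) else 0)
            = (if k' = k then 1 else 0) + (if k' = k + 1 then 1 else 0) := by
          intro k'
          simp only [hmemI]
          by_cases h1 : k' = k
          · subst h1
            have : ¬ (k' = k' + 1) := by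
              intro h; exact hone (left_eq_add.1 h)
            simp [hone]
          · simp [h1]
        rw [Finset.sum_congr rfl (fun k' _ => this k'), Finset.sum_add_distrib]
        simp only [Finset.sum_ite_eq', Finset.mem_univ, if_true]
        decide
      · by_cases hk : ∃ k, q ∈ g k
        · obtain ⟨k, hk⟩ := hk
          rw [if_pos (by simp only [Finset.mem_biUnion, Finset.mem_sdiff]; exact ⟨k, by simp, hk, hq⟩)]
          rw [Finset.sum_eq_single k]
          · simp [hk]
          · intro b _ hb
            rw [if_neg]
            intro h
            exact hb (hdisj q b k h hk hq)
          · simp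
        · push Not at hk
          simp [hk]
    rw [key] at hind
    by_cases h1 : q ∈ iterSD K g <;>
    by_cases h2 : q ∈ Finset.univ.biUnion (fun k => g k \ I)
    · exact iff_of_true h1 h2
    · rw [if_pos h1, if_neg h2] at hind; exact absurd hind (by decide)
    · rw [if_neg h1, if_pos h2] at hind; exact absurd hind (by decide)
    · exact iff_of_false h1 h2
  have hgI : ∀ k, (g k \ I).card + 2 = (g k).card := by
    intro k
    have h1 : g k ∩ I = ({k, k - 1} : Finset (ZMod K)).image idx := by
      ext q
      simp only [Finset.mem_inter, hI, Finset.mem_image, Finset.mem_univ, true_and,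
        Finset.mem_insert, Finset.mem_singleton]
      constructor
      · rintro ⟨h, a, rfl⟩
        rw [hmemI] at h
        refine ⟨a, ?_, rfl⟩
        rcases h with h | h
        · exact Or.inl h.symm
        · right; rw [h]; ring
      · rintro ⟨a, h, rfl⟩
        refine ⟨?_, a, rfl⟩
        rw [hmemI]
        rcases h with h | h
        · exact Or.inl h.symm
        · right; rw [h]; ring
    have h2 : (g k ∩ I).card = 2 := by
      rw [h1, Finset.card_image_of_injective _ hidx, Finset.card_pair]
      intro h
      exact hone (by simpa using (sub_eq_self.1 h.symm))
    have := Finset.card_sdiff_add_card_inter (g k) I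
    omega
  have hDcard : (iterSD K g).card = ∑ k, (g k \ I).card := by
    rw [hD, Finset.card_biUnion]
    intro k _ k' _ hne
    refine Finset.disjoint_left.2 ?_
    intro q h h'
    rw [Finset.mem_sdiff] at h h'
    exact hne (hdisj q k k' h.1 h'.1 h.2)
  have hecard : e.card = 1 + ∑ k, (e ∩ (g k \ I)).card := by
    have h1 := Finset.card_sdiff_add_card_inter e I
    rw [heI, Finset.card_singleton] at h1
    have h2 : e \ I = Finset.univ.biUnion (fun k => e ∩ (g k \ I)) := by
      ext q
      simp only [Finset.mem_sdiff, Finset.mem_biUnion, Finset.mem_inter, Finset.mem_univ, true_and]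
      constructor
      · rintro ⟨h, h'⟩
        obtain ⟨k, _, hk⟩ := Finset.mem_biUnion.1 (hesub h)
        exact ⟨k, h, hk, h'⟩
      · rintro ⟨k, h, hk, h'⟩
        exact ⟨h, h'⟩
    rw [h2, Finset.card_biUnion] at h1
    · omega
    intro k _ k' _ hne
    refine Finset.disjoint_left.2 ?_
    intro q h h'
    rw [Finset.mem_inter, Finset.mem_sdiff] at h h'
    exact hne (hdisj q k k' h.2.1 h'.2.1 h.2.2)
  have hrel : (iterSD K g).card + 2 = 2 * e.card := by
    have : ∑ k, (g k \ I).card = 2 * ∑ k, (e ∩ (g k \ I)).card := by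
      rw [Finset.mul_sum]
      refine Finset.sum_congr rfl fun k _ => ?_
      have h1 := hek k
      have h2 := hgI k
      obtain ⟨m, hm⟩ := hgEven k
      omega
    omega
  have hrelR : ((iterSD K g).card : ℝ) + 2 = 2 * e.card := by exact_mod_cast hrel
  have hsum : ∑ i, x i = ((iterSD K g).card : ℝ) / 2 := by
    rw [Finset.sum_congr rfl (fun i _ => hx i), Finset.sum_ite_mem]
    simp [div_eq_mul_inv]
  refine ⟨?_, hsum, by rw [hsum]; linarith, by rw [hsum]; linarith⟩
  have hw : ∀ j, _ := fun j => exists_w (f j) (f j ∩ iterSD K g) Finset.inter_subset_left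
    (even_inter_iterSD K g (f j) (hfgEven j)) (s j) (by
      intro h0
      have h1 : e ∩ f j = ∅ := by
        rw [Finset.eq_empty_iff_forall_notMem]
        intro q hq
        rw [Finset.mem_inter] at hq
        by_cases hqI : q ∈ I
        · have := hX j ⟨q, Finset.mem_inter.2 ⟨hq.2, hqI⟩⟩
          rw [h0] at this
          simp at this
        · obtain ⟨k, _, hk⟩ := Finset.mem_biUnion.1 (hesub hq.1)
          have : q ∈ f j ∩ iterSD K g := by
            rw [Finset.mem_inter, hD, Finset.mem_biUnion]
            exact ⟨hq.2, k, Finset.mem_univ _, Finset.mem_sdiff.2 ⟨hk, hqI⟩⟩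
          rw [h0] at this
          simp at this
      rw [hs, h1]; simp)
  choose w hw1 hw2 hw3 using hw
  refine ⟨w, hw1, ?_, ?_, fun j S _ => hw3 j S⟩
  · intro j i hi
    rw [hw2 j i hi, hx]
    simp [hi]
  · intro i
    rw [hx]
    positivity
end

section
/- Suppose (x, w) is feasible for the syndrome-based LP with syndrome s, and every value x_i and every value w_{j,S} lies in {0, 1}. Then for every j ∈ C_X, the cardinality of {i ∈ f_j : x_i = 1} is congruent to s_j modulo 2; that is, the 0/1 vector x satisfies every parity check of the syndrome. -/
open Finset

/-- An integral feasible solution of the syndrome-based LP satisfies every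
parity check of the syndrome. -/
theorem stmt11 {Q C_X : Type*} [DecidableEq Q]
    (f : C_X → Finset Q) (s : C_X → ZMod 2)
    (x : Q → ℝ) (w : C_X → Finset Q → ℝ)
    (hfeas : SynFeasible f s x w)
    (hx01 : ∀ i, x i = 0 ∨ x i = 1)
    (hw01 : ∀ j, ∀ S ∈ (f j).powerset.filter (fun S => (S.card : ZMod 2) = s j),
      w j S = 0 ∨ w j S = 1) :
    ∀ j, ((((f j).filter (fun i => x i = 1)).card : ZMod 2) = s j) := by
  intro j
  obtain ⟨h1, h2, -, h4⟩ := hfeas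
  have h1 := h1 j
  have h2 := h2 j
  have h4 := h4 j
  have hw := hw01 j
  obtain ⟨T, hT, hT0⟩ : ∃ T ∈ (f j).powerset.filter (fun S => (S.card : ZMod 2) = s j),
      w j T ≠ 0 := by
    apply Finset.exists_ne_zero_of_sum_ne_zero
    rw [h1]
    exact one_ne_zero
  have hT1 : w j T = 1 := (hw T hT).resolve_left hT0
  have hrest : ∀ S ∈ (f j).powerset.filter (fun S => (S.card : ZMod 2) = s j),
      S ≠ T → w j S = 0 := by
    intro S hS hne
    have h5 := Finset.add_sum_erase _ (w j) hT
    have h6 : w j S ≤ ∑ R ∈ ((f j).powerset.filter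
        (fun S => (S.card : ZMod 2) = s j)).erase T, w j R :=
      Finset.single_le_sum (f := w j) (fun R hR => h4 R (Finset.mem_of_mem_erase hR))
        (Finset.mem_erase.2 ⟨hne, hS⟩)
    have h7 := h4 S hS
    linarith
  have hTm := Finset.mem_filter.1 hT
  have hsub := Finset.mem_powerset.1 hTm.1
  have key : (f j).filter (fun i => x i = 1) = T := by
    ext i
    rw [Finset.mem_filter]
    constructor
    · rintro ⟨hi, hxi⟩
      by_contra hn
      have h8 := h2 i hi
      rw [Finset.sum_eq_zero, hxi] at h8
      · exact zero_ne_one h8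
      · intro S hS
        have hS := Finset.mem_filter.1 hS
        refine hrest S (Finset.mem_filter.2 ⟨hS.1, hS.2.1⟩) ?_
        rintro rfl
        exact hn hS.2.2
    · intro hi
      refine ⟨hsub hi, ?_⟩
      rw [← h2 i (hsub hi), Finset.sum_eq_single T, hT1]
      · intro S hS hne
        have hS := Finset.mem_filter.1 hS
        exact hrest S (Finset.mem_filter.2 ⟨hS.1, hS.2.1⟩) hne
      · intro h
        exact absurd (Finset.mem_filter.2 ⟨hTm.1, hTm.2, hi⟩) h
  rw [key]
  exact hTm.2
end

section
/- Let y ⊆ Q satisfy |y ∩ f_j| ≡ s_j (mod 2) for every j ∈ C_X. Define x : Q → ℝ by x_i = 1 if i ∈ y and x_i = 0 otherwise, and define w_{j,S} = 1 if S = y ∩ f_j and w_{j,S} = 0 otherwise. Then (x, w) is feasible for the syndrome-based LP with syndrome s, and its objective value equals |y|. Consequently, the optimal value of the syndrome-based LP is at most the minimum weight of a binary vector with syndrome s. -/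
open Finset

/-- The indicator vector of any set `y` with syndrome `s` is feasible for the
syndrome-based LP with objective value `|y|`; consequently, the optimal value of the
LP is at most the minimum weight of a binary vector with syndrome `s`. -/
theorem stmt12 {Q C_X : Type*} [Fintype Q] [DecidableEq Q]
    (f : C_X → Finset Q) (s : C_X → ZMod 2)
    (y : Finset Q) (hy : ∀ j, (((y ∩ f j).card : ZMod 2) = s j))
    (x : Q → ℝ) (hx : ∀ i, x i = if i ∈ y then (1 : ℝ) else 0)
    (w : C_X → Finset Q → ℝ)
    (hw : ∀ j S, w j S = if S = y ∩ f j then (1 : ℝ) else 0) :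
    SynFeasible f s x w ∧ (∑ i, x i = (y.card : ℝ)) ∧
      (∀ (xopt : Q → ℝ) (wopt : C_X → Finset Q → ℝ), SynFeasible f s xopt wopt →
        (∀ (x₂ : Q → ℝ) (w₂ : C_X → Finset Q → ℝ), SynFeasible f s x₂ w₂ →
          ∑ i, xopt i ≤ ∑ i, x₂ i) →
        ∑ i, xopt i ≤ (y.card : ℝ)) := by
  have hf : SynFeasible f s x w := by
    refine ⟨fun j => ?_, fun j i hi => ?_, fun i => ?_, fun j S _ => ?_⟩
    · simp only [hw]
      rw [Finset.sum_ite_eq', if_pos]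
      simp [hy]
    · simp only [hw, hx]
      rw [Finset.sum_ite_eq']
      simp [hy, hi]
    · rw [hx]; split_ifs <;> norm_num
    · rw [hw]; split_ifs <;> norm_num
  have ho : ∑ i, x i = (y.card : ℝ) := by
    simp [hx]
  exact ⟨hf, ho, fun xopt wopt _ h => ho ▸ h x w hf⟩
end

section
/- Suppose (x, w) is feasible for the syndrome-based LP with syndrome s, every value x_i and every value w_{j,S} lies in {0, 1}, and Σ_{i ∈ Q} x_i ≤ Σ_{i ∈ Q} x̃_i for every feasible pair (x̃, w̃) of the same LP (i.e. (x, w) is an optimal solution that happens to be integral). Then the set y = {i ∈ Q : x_i = 1} satisfies |y ∩ f_j| ≡ s_j (mod 2) for every j ∈ C_X, and |y| ≤ |y'| for every set y' ⊆ Q with |y' ∩ f_j| ≡ s_j (mod 2) for every j ∈ C_X. In other words, an integral optimal solution of the LP relaxation is a minimum-weight error consistent with the syndrome. -/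
open Finset

/-- An integral optimal solution of the syndrome-based LP relaxation is a
minimum-weight error consistent with the syndrome. -/
theorem stmt13 {Q C_X : Type*} [Fintype Q] [DecidableEq Q]
    (f : C_X → Finset Q) (s : C_X → ZMod 2)
    (x : Q → ℝ) (w : C_X → Finset Q → ℝ)
    (hfeas : SynFeasible f s x w)
    (hx01 : ∀ i, x i = 0 ∨ x i = 1)
    (hw01 : ∀ j, ∀ S ∈ (f j).powerset.filter (fun S => (S.card : ZMod 2) = s j),
      w j S = 0 ∨ w j S = 1)
    (hopt : ∀ (xt : Q → ℝ) (wt : C_X → Finset Q → ℝ), SynFeasible f s xt wt →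
      ∑ i, x i ≤ ∑ i, xt i) :
    (∀ j, ((((Finset.univ.filter (fun i => x i = 1)) ∩ f j).card : ZMod 2) = s j)) ∧
      ∀ y' : Finset Q, (∀ j, (((y' ∩ f j).card : ZMod 2) = s j)) →
        (Finset.univ.filter (fun i => x i = 1)).card ≤ y'.card := by
  obtain ⟨h1, h2, h3, h4⟩ := hfeas
  refine ⟨fun j => ?_, fun y' hy' => ?_⟩
  · obtain ⟨S, hS, hne⟩ := Finset.exists_ne_zero_of_sum_ne_zero (by rw [h1 j]; exact one_ne_zero)
    have hw1 : w j S = 1 := (hw01 j S hS).resolve_left hne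
    have hS' := hS
    simp only [Finset.mem_filter, Finset.mem_powerset] at hS'
    have key : (Finset.univ.filter (fun i => x i = 1)) ∩ f j = S := by
      ext i
      simp only [Finset.mem_inter, Finset.mem_filter, Finset.mem_univ, true_and]
      constructor
      · rintro ⟨hxi, hif⟩
        by_contra hiS
        have hsub : insert S ((f j).powerset.filter
            (fun S => (S.card : ZMod 2) = s j ∧ i ∈ S)) ⊆
            (f j).powerset.filter (fun S => (S.card : ZMod 2) = s j) := by
          intro T hT
          rcases Finset.mem_insert.1 hT with rfl | hT
          · exact hS
          · simp only [Finset.mem_filter] at hT ⊢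
            exact ⟨hT.1, hT.2.1⟩
        have hle := Finset.sum_le_sum_of_subset_of_nonneg hsub
          (f := w j) (fun T hT _ => h4 j T hT)
        rw [Finset.sum_insert (by simp [hiS]), h1 j, h2 j i hif] at hle
        linarith
      · intro hiS
        have hif := hS'.1 hiS
        refine ⟨(hx01 i).resolve_left fun h0 => ?_, hif⟩
        have hle := Finset.single_le_sum (f := w j)
          (s := (f j).powerset.filter (fun S => (S.card : ZMod 2) = s j ∧ i ∈ S))
          (fun T hT => h4 j T (by
            simp only [Finset.mem_filter] at hT ⊢
            exact ⟨hT.1, hT.2.1⟩))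
          (a := S) (by simp only [Finset.mem_filter, Finset.mem_powerset]; exact ⟨hS'.1, hS'.2, hiS⟩)
        rw [h2 j i hif] at hle
        linarith
    rw [key]
    exact hS'.2
  · have h := hopt (fun i => if i ∈ y' then 1 else 0)
      (fun j S => if S = y' ∩ f j then 1 else 0) ?_
    · have hx : ∑ i, x i = ((Finset.univ.filter (fun i => x i = 1)).card : ℝ) := by
        rw [Finset.card_filter]
        push_cast
        refine Finset.sum_congr rfl fun i _ => ?_
        rcases hx01 i with h | h <;> simp [h]
      rw [hx] at h
      simp only [Finset.sum_ite_mem, Finset.univ_inter, Finset.sum_const, nsmul_eq_mul,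
        mul_one] at h
      exact_mod_cast h
    · refine ⟨fun j => ?_, fun j i hi => ?_, fun i => ?_, fun j S _ => ?_⟩
      · rw [Finset.sum_ite_eq', if_pos]
        simp [hy' j, Finset.inter_subset_right]
      · rw [Finset.sum_ite_eq']
        simp [hy' j, Finset.inter_subset_right, hi]
      · dsimp only; split_ifs <;> norm_num
      · dsimp only; split_ifs <;> norm_num
end

section
/- Let (g_0, …, g_{K−1}; i_0, …, i_{K−1}) be a cyclic stabilizer configuration of length K ≥ 3 on Q, and let f ⊆ Q be a finite set such that |f ∩ g_k| is even for every k, f ∩ Δ = ∅, and f ∩ I ≠ ∅. Then I ⊆ f. -/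
open Finset

theorem mem_foldr_sd {Q : Type*} [DecidableEq Q] (h : ℕ → Finset Q) (x : Q) (l : List ℕ) :
    x ∈ l.foldr (fun k acc => symmDiff (h k) acc) ∅ ↔ Odd (l.countP (fun k => decide (x ∈ h k))) := by
  induction l with
  | nil => simp
  | cons a l ih =>
    rw [List.foldr_cons, Finset.mem_symmDiff, ih, List.countP_cons]
    by_cases hx : x ∈ h a
    · simp [hx, Nat.odd_add_one]
    · simp [hx]

theorem mem_iterSD_of_unique {Q : Type*} [DecidableEq Q] (K : ℕ) [NeZero K]
    (g : ZMod K → Finset Q) (x : Q) (k : ZMod K) (hk : x ∈ g k)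
    (hu : ∀ k', x ∈ g k' → k' = k) : x ∈ iterSD K g := by
  unfold iterSD
  have hl : (do let a ← List.range K; pure (a : ZMod K)) = (List.range K).map (fun a : ℕ => (a : ZMod K)) := by
    simp [List.map_eq_flatMap]
  rw [hl, List.foldr_map, mem_foldr_sd (fun n => g (n : ZMod K))]
  have h1 : (List.range K).countP (fun n : ℕ => decide (x ∈ g (n : ZMod K)))
      = (List.range K).count k.val := by
    rw [List.count]
    apply List.countP_congr
    intro n hn
    have hn' : n < K := List.mem_range.1 hn
    simp only [decide_eq_true_eq, beq_iff_eq]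
    constructor
    · intro h
      rw [← hu _ h, ZMod.val_cast_of_lt hn']
    · rintro rfl
      simpa using hk
  rw [h1, List.count_eq_one_of_mem List.nodup_range (List.mem_range.2 (ZMod.val_lt k))]
  exact odd_one

/-- For a cyclic stabilizer configuration, a set `F` that meets each `g k` evenly,
is disjoint from the iterated symmetric difference `Δ`, and meets the set `I`
of intersection points, must contain all of `I`. -/
theorem stmt14 {Q : Type*} [DecidableEq Q] (K : ℕ) [NeZero K] (hK : 3 ≤ K)
    (g : ZMod K → Finset Q) (idx : ZMod K → Q)
    (hidx : Function.Injective idx)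
    (hadj : ∀ k, g k ∩ g (k + 1) = {idx k})
    (hfar : ∀ k k' : ZMod K, k' ≠ k - 1 → k' ≠ k → k' ≠ k + 1 → g k ∩ g k' = ∅)
    (F : Finset Q)
    (hFg : ∀ k, Even ((F ∩ g k).card))
    (hFΔ : F ∩ iterSD K g = ∅)
    (hFI : (F ∩ Finset.univ.image idx).Nonempty) :
    Finset.univ.image idx ⊆ F := by
  have hm : ∀ k, idx k ∈ g k ∧ idx k ∈ g (k + 1) := by
    intro k
    have : idx k ∈ g k ∩ g (k + 1) := by rw [hadj]; simp
    simpa using this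
  have step : ∀ k, idx k ∈ F → idx (k + 1) ∈ F := by
    intro k hk
    by_contra hc
    have hs : F ∩ g (k + 1) = {idx k} := by
      ext x
      simp only [Finset.mem_inter, Finset.mem_singleton]
      constructor
      · rintro ⟨hxF, hxg⟩
        by_contra hx
        have hxΔ : x ∈ iterSD K g := by
          apply mem_iterSD_of_unique K g x (k + 1) hxg
          intro k' hk'
          by_contra hkk
          by_cases h1 : k' = k
          · subst h1
            have : x ∈ g k' ∩ g (k' + 1) := Finset.mem_inter.2 ⟨hk', hxg⟩
            rw [hadj] at this
            exact hx (Finset.mem_singleton.1 this)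
          by_cases h2 : k' = k + 1 + 1
          · subst h2
            have : x ∈ g (k + 1) ∩ g (k + 1 + 1) := Finset.mem_inter.2 ⟨hxg, hk'⟩
            rw [hadj] at this
            rw [Finset.mem_singleton.1 this] at hxF
            exact hc hxF
          have : x ∈ g (k + 1) ∩ g k' := Finset.mem_inter.2 ⟨hxg, hk'⟩
          rw [hfar (k + 1) k' (by simpa using h1) hkk h2] at this
          simp at this
        have : x ∈ F ∩ iterSD K g := Finset.mem_inter.2 ⟨hxF, hxΔ⟩
        rw [hFΔ] at this
        simp at this
      · rintro rfl
        exact ⟨hk, (hm k).2⟩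
    have := hFg (k + 1)
    rw [hs] at this
    simp at this
  obtain ⟨x, hx⟩ := hFI
  simp only [Finset.mem_inter, Finset.mem_image, Finset.mem_univ, true_and] at hx
  obtain ⟨hxF, k, rfl⟩ := hx
  have hall : ∀ n : ℕ, idx (k + n) ∈ F := by
    intro n
    induction n with
    | zero => simpa using hxF
    | succ n ih =>
      have := step _ ih
      rwa [add_assoc, ← Nat.cast_succ] at this
  intro y hy
  simp only [Finset.mem_image, Finset.mem_univ, true_and] at hy
  obtain ⟨j, rfl⟩ := hy
  have := hall (j - k).val
  simpa using this
end

section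
/- Let G be a simple graph on a nonempty finite vertex set of cardinality n in which every vertex has degree at least 3, and let r ≥ 1 be a natural number. If every cycle in G has length at least 2r + 1 (i.e. the girth of G is at least 2r + 1), then n ≥ 3·2^r − 2. In particular, the girth of a finite graph of minimum degree at least 3 is O(log n). -/
namespace Moore17

lemma unique_nbr {V : Type*} (G : SimpleGraph V) (r : ℕ)
    (hg : 2 * r + 1 ≤ G.girth) (x v w w' : V) (j : ℕ) (hj : j + 1 ≤ r)
    (hw : G.Adj w v) (hw' : G.Adj w' v) (hv : j ≤ G.dist x v)
    (rw1 : G.Reachable x w) (rw2 : G.Reachable x w')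
    (d1 : G.dist x w ≤ j) (d2 : G.dist x w' ≤ j) : w = w' := by
  classical
  have key : ∀ u, G.Adj u v → G.Reachable x u → G.dist x u ≤ j →
      ∃ p : G.Walk x v, p.IsPath ∧ p.length ≤ j + 1 ∧ p.penultimate = u := by
    intro u hu ru du
    obtain ⟨p, hp, hl⟩ := ru.exists_path_of_dist
    refine ⟨p.concat hu, hp.concat ?_ hu, ?_, by simp⟩
    · intro hmem
      have h1 := SimpleGraph.Walk.length_takeUntil_lt_length hmem hu.ne'
      have h2 := SimpleGraph.dist_le (p.takeUntil v hmem)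
      omega
    · rw [SimpleGraph.Walk.length_concat]; omega
  obtain ⟨p, hp, lp, ep⟩ := key w hw rw1 d1
  obtain ⟨q, hq, lq, eq⟩ := key w' hw' rw2 d2
  by_contra hne
  have hpq : p ≠ q := by
    rintro rfl
    exact hne (ep.symm.trans eq)
  obtain ⟨_, _, _, c, hc, hl⟩ := hp.exists_isCycle_length_le_add_of_ne hq hpq
  have := SimpleGraph.girth_le_length hc
  omega

open Classical in
noncomputable def D {V : Type*} [Fintype V] (G : SimpleGraph V) (x : V) (k : ℕ) : Finset V :=
  Finset.univ.filter fun v => G.Reachable x v ∧ G.dist x v = k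

lemma mem_D {V : Type*} [Fintype V] (G : SimpleGraph V) (x : V) (k : ℕ) (v : V) :
    v ∈ D G x k ↔ G.Reachable x v ∧ G.dist x v = k := by
  simp [D]

lemma nbr {V : Type*} (G : SimpleGraph V) (x v u : V) (hv : G.Reachable x v) (h : G.Adj v u) :
    G.Reachable x u ∧ G.dist x u ≤ G.dist x v + 1 := by
  refine ⟨hv.trans h.reachable, ?_⟩
  obtain ⟨p, hp⟩ := hv.exists_walk_length_eq_dist
  have := SimpleGraph.dist_le (p.concat h)
  rw [SimpleGraph.Walk.length_concat] at this
  omega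

lemma D_step {V : Type*} [Fintype V] (G : SimpleGraph V)
    [DecidableRel G.Adj] (hdeg : ∀ v : V, 3 ≤ G.degree v) (r : ℕ)
    (hg : 2 * r + 1 ≤ G.girth) (x : V) (k : ℕ) (hk : k + 1 ≤ r) :
    (D G x k).card * 2 ≤ (D G x (k+1)).card * 1 := by
  classical
  apply Finset.card_mul_le_card_mul G.Adj
  · intro v hv
    rw [mem_D] at hv
    have hsub : G.neighborFinset v ⊆
        Finset.bipartiteAbove G.Adj (D G x (k+1)) v ∪
          (G.neighborFinset v).filter (fun u => G.dist x u ≤ k) := by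
      intro u hu
      rw [SimpleGraph.mem_neighborFinset] at hu
      have := nbr G x v u hv.1 hu
      simp only [Finset.mem_union, Finset.mem_bipartiteAbove, mem_D, Finset.mem_filter,
        SimpleGraph.mem_neighborFinset]
      by_cases h : G.dist x u ≤ k
      · exact Or.inr ⟨hu, h⟩
      · exact Or.inl ⟨⟨this.1, by omega⟩, hu⟩
    have h1 : ((G.neighborFinset v).filter (fun u => G.dist x u ≤ k)).card ≤ 1 := by
      rw [Finset.card_le_one]
      intro a ha b hb
      simp only [Finset.mem_filter, SimpleGraph.mem_neighborFinset] at ha hb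
      exact unique_nbr G r hg x v a b k hk ha.1.symm hb.1.symm hv.2.ge
        (nbr G x v a hv.1 ha.1).1 (nbr G x v b hv.1 hb.1).1 ha.2 hb.2
    have h2 := (Finset.card_le_card hsub).trans (Finset.card_union_le _ _)
    have h3 := hdeg v
    rw [SimpleGraph.card_neighborFinset_eq_degree] at h2
    omega
  · intro v hv
    rw [mem_D] at hv
    rw [Finset.card_le_one]
    intro a ha b hb
    simp only [Finset.mem_bipartiteBelow, mem_D] at ha hb
    exact unique_nbr G r hg x v a b k hk ha.2 hb.2 (by omega) ha.1.1 hb.1.1 ha.1.2.le hb.1.2.le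

lemma D_one {V : Type*} [Fintype V] (G : SimpleGraph V)
    [DecidableRel G.Adj] (hdeg : ∀ v : V, 3 ≤ G.degree v) (x : V) : 3 ≤ (D G x 1).card := by
  refine (hdeg x).trans ?_
  rw [← SimpleGraph.card_neighborFinset_eq_degree]
  apply Finset.card_le_card
  intro u hu
  rw [SimpleGraph.mem_neighborFinset] at hu
  rw [mem_D]
  exact ⟨hu.reachable, SimpleGraph.dist_eq_one_iff_adj.2 hu⟩

lemma D_card {V : Type*} [Fintype V] (G : SimpleGraph V)
    [DecidableRel G.Adj] (hdeg : ∀ v : V, 3 ≤ G.degree v) (r : ℕ)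
    (hg : 2 * r + 1 ≤ G.girth) (x : V) (k : ℕ) (hk : k + 1 ≤ r) :
    3 * 2 ^ k ≤ (D G x (k+1)).card := by
  induction k with
  | zero => simpa using D_one G hdeg x
  | succ k ih =>
    have := D_step G hdeg r hg x (k+1) hk
    have := ih (by omega)
    rw [pow_succ]
    omega

open Classical in
lemma ball_card {V : Type*} [Fintype V] (G : SimpleGraph V)
    [DecidableRel G.Adj] (hdeg : ∀ v : V, 3 ≤ G.degree v) (r : ℕ)
    (hg : 2 * r + 1 ≤ G.girth) (x : V) (k : ℕ) (hk : k ≤ r) :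
    3 * 2 ^ k ≤ (Finset.univ.filter fun v => G.Reachable x v ∧ G.dist x v ≤ k).card + 2 := by
  induction k with
  | zero =>
    have : 0 < (Finset.univ.filter fun v => G.Reachable x v ∧ G.dist x v ≤ 0).card :=
      Finset.card_pos.2 ⟨x, by simp⟩
    omega
  | succ k ih =>
    have h1 := D_card G hdeg r hg x k hk
    have h2 := ih (by omega)
    have hd : Disjoint (Finset.univ.filter fun v => G.Reachable x v ∧ G.dist x v ≤ k)
        (D G x (k+1)) := by
      rw [Finset.disjoint_left]
      intro v hv hv'
      rw [mem_D] at hv'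
      simp only [Finset.mem_filter] at hv
      omega
    have hs : (Finset.univ.filter fun v => G.Reachable x v ∧ G.dist x v ≤ k) ∪ (D G x (k+1)) ⊆
        (Finset.univ.filter fun v => G.Reachable x v ∧ G.dist x v ≤ k + 1) := by
      intro v hv
      simp only [Finset.mem_union, Finset.mem_filter, mem_D, Finset.mem_univ, true_and] at hv ⊢
      rcases hv with h | h
      · exact ⟨h.1, by omega⟩
      · exact ⟨h.1, by omega⟩
    have h3 := Finset.card_le_card hs
    rw [Finset.card_union_of_disjoint hd] at h3
    rw [pow_succ]
    omega

end Moore17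

/-- Moore bound: a finite nonempty graph with minimum degree at least 3 and girth at
least `2r + 1` has at least `3·2^r − 2` vertices. -/
theorem stmt17 {V : Type*} [Fintype V] [Nonempty V] (G : SimpleGraph V)
    [DecidableRel G.Adj] (hdeg : ∀ v : V, 3 ≤ G.degree v)
    (r : ℕ) (hr : 1 ≤ r) (hgirth : ((2 * r + 1 : ℕ) : ℕ∞) ≤ G.girth) :
    3 * 2 ^ r - 2 ≤ Fintype.card V := by
  classical
  have hg : 2 * r + 1 ≤ G.girth := by exact_mod_cast hgirth
  obtain ⟨x⟩ := ‹Nonempty V›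
  have h1 := Moore17.ball_card G hdeg r hg x r le_rfl
  have h2 := Finset.card_le_univ (Finset.univ.filter fun v => G.Reachable x v ∧ G.dist x v ≤ r)
  omega
end
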